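/- arXiv:2010.01129 — 8 statements merged into one kernel-verified Lean document; each statement's English description precedes it below -/
import Mathlib

section
/- For every real a ≥ 0 and every real b, there is no point z ∈ ℂ satisfying g_{a,b}(z) = z and g_{a,b}'(z) = 1; that is, the real cubic polynomial g_{a,b} has no fixed point of multiplier one. -/
/-!
Write `c = 3a²`. Eliminating `z³` between the two equations leaves a linear relation
`2(1 + c)z = 3b`, so a fixed point of multiplier one would be real. But on the real line
the derivative `-3x² - c` stays below `1`, since `-1 < c`.
-/

theorem two_mul_one_add_mul_eq_of_multiplier_one_fixed_point {R : Type*} [CommRing R] {b c z : R}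
    (hfix : -z ^ 3 - c * z + b = z) (hmult : -3 * z ^ 2 - c = 1) :
    2 * (1 + c) * z = 3 * b := by
  linear_combination z * hmult - 3 * hfix

theorem exists_ofReal_eq_of_multiplier_one_fixed_point {b c : ℝ} {z : ℂ} (hc : 1 + c ≠ 0)
    (hfix : -z ^ 3 - c * z + b = z) (hmult : -3 * z ^ 2 - c = 1) :
    ∃ x : ℝ, (x : ℂ) = z := by
  have hlin := two_mul_one_add_mul_eq_of_multiplier_one_fixed_point hfix hmult
  have hcoeff : (2 * (1 + c) : ℂ) ≠ 0 := mod_cast mul_ne_zero two_ne_zero hc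
  refine ⟨3 * b / (2 * (1 + c)), ?_⟩
  push_cast
  rw [div_eq_iff hcoeff, mul_comm z, hlin]

theorem no_multiplier_one_fixed_point_general {c : ℝ} (hc : -1 < c) (b : ℝ) :
    ¬ ∃ z : ℂ, (-z ^ 3 - c * z + b = z) ∧ (-3 * z ^ 2 - c = 1) := by
  rintro ⟨z, hfix, hmult⟩
  obtain ⟨x, rfl⟩ := exists_ofReal_eq_of_multiplier_one_fixed_point (by linarith) hfix hmult
  have hmult_real : -3 * x ^ 2 - c = 1 := mod_cast hmult
  linarith [sq_nonneg x]

/-- For real parameters `a ≥ 0` and `b`, the real cubic polynomial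
`g_{a,b}(z) = -z^3 - 3a^2 z + b` (with derivative `g'_{a,b}(z) = -3z^2 - 3a^2`)
has no fixed point of multiplier one. -/
theorem no_multiplier_one_fixed_point (a b : ℝ) (ha : 0 ≤ a) :
    ¬ ∃ z : ℂ, (-z ^ 3 - 3 * (a : ℂ) ^ 2 * z + (b : ℂ) = z) ∧
      (-3 * z ^ 2 - 3 * (a : ℂ) ^ 2 = 1) := by
  have hc : -1 < 3 * a ^ 2 := neg_one_lt_zero.trans_le (by positivity)
  exact mod_cast no_multiplier_one_fixed_point_general hc b
end

section
/- For all real a ≥ 0 and real b, the polynomial g_{a,b} has a fixed point of multiplier −1 (i.e. there exists z ∈ ℂ with g_{a,b}(z) = z and g_{a,b}'(z) = −1) if and only if 4(3a² − 1)(3a² + 2)² + 27b² = 0. -/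
/-!
Write `c = a ^ 2` and let `μ` be the prescribed multiplier. Modulo the multiplier equation
`-3z² - 3c = μ`, three times the fixed point equation is linear in `z`, namely
`3b = (3 + 6c - μ)z`. Squaring and substituting `3z² = -(3c + μ)` eliminates `z` and gives
`(3c + μ)(3 + 6c - μ)² + 27b² = 0`. Conversely, the linear equation recovers `z` from a point of
this curve unless `3 + 6c - μ = 0`. For `μ = -1` that exceptional case is `3c = -2`, `b = 0`,
where `z = 1` is a fixed point of multiplier `-1`.
-/

section CommRing

variable {R : Type*} [CommRing R] {b c μ z : R}

theorem three_mul_cubic_sub_self (hmult : -3 * z ^ 2 - 3 * c = μ) :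
    3 * (-z ^ 3 - 3 * c * z + b - z) = 3 * b - (3 + 6 * c - μ) * z := by
  linear_combination z * hmult

theorem multiplier_curve_eq_sq_mul (hlin : 3 * b = (3 + 6 * c - μ) * z) :
    (3 * c + μ) * (3 + 6 * c - μ) ^ 2 + 27 * b ^ 2 =
      (3 + 6 * c - μ) ^ 2 * (μ - (-3 * z ^ 2 - 3 * c)) := by
  linear_combination 3 * (3 * b + (3 + 6 * c - μ) * z) * hlin

theorem multiplier_curve_of_fixedPoint (hfix : -z ^ 3 - 3 * c * z + b = z)
    (hmult : -3 * z ^ 2 - 3 * c = μ) :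
    (3 * c + μ) * (3 + 6 * c - μ) ^ 2 + 27 * b ^ 2 = 0 := by
  have hlin : 3 * b = (3 + 6 * c - μ) * z := by
    rw [← sub_eq_zero, ← three_mul_cubic_sub_self hmult, hfix, sub_self, mul_zero]
  rw [multiplier_curve_eq_sq_mul hlin, hmult, sub_self, mul_zero]

end CommRing

section Field

variable {K : Type*} [Field K] {b c μ : K}

theorem exists_fixedPoint_of_multiplier_curve (h3 : (3 : K) ≠ 0) (hD : 3 + 6 * c - μ ≠ 0)
    (hcurve : (3 * c + μ) * (3 + 6 * c - μ) ^ 2 + 27 * b ^ 2 = 0) :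
    ∃ z : K, -z ^ 3 - 3 * c * z + b = z ∧ -3 * z ^ 2 - 3 * c = μ := by
  obtain ⟨z, hlin⟩ : ∃ z, 3 * b = (3 + 6 * c - μ) * z :=
    ⟨3 * b / (3 + 6 * c - μ), (mul_div_cancel₀ _ hD).symm⟩
  have hmult : -3 * z ^ 2 - 3 * c = μ := by
    rw [multiplier_curve_eq_sq_mul hlin] at hcurve
    exact (sub_eq_zero.mp ((mul_eq_zero_iff_left (pow_ne_zero 2 hD)).mp hcurve)).symm
  have hfix : 3 * (-z ^ 3 - 3 * c * z + b - z) = 0 := by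
    rw [three_mul_cubic_sub_self hmult, hlin, sub_self]
  exact ⟨z, sub_eq_zero.mp ((mul_eq_zero_iff_left h3).mp hfix), hmult⟩

theorem three_ne_zero_of_neg_one_curve
    (hcurve : 4 * (3 * c - 1) * (3 * c + 2) ^ 2 + 27 * b ^ 2 = 0) : (3 : K) ≠ 0 := by
  intro h3
  -- Modulo 3 the left side of the curve equation is the constant `-16 = -1`.
  have : (1 : K) = 0 := by
    linear_combination (36 * (c ^ 3 + c ^ 2) + 9 * b ^ 2 - 5) * h3 - hcurve
  exact one_ne_zero this

theorem per_one_neg_one_curve_general (h2 : (2 : K) ≠ 0) (b c : K) :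
    (∃ z : K, -z ^ 3 - 3 * c * z + b = z ∧ -3 * z ^ 2 - 3 * c = -1) ↔
      4 * (3 * c - 1) * (3 * c + 2) ^ 2 + 27 * b ^ 2 = 0 := by
  constructor
  · rintro ⟨z, hfix, hmult⟩
    linear_combination multiplier_curve_of_fixedPoint hfix hmult
  · intro hcurve
    have h3 : (3 : K) ≠ 0 := three_ne_zero_of_neg_one_curve hcurve
    by_cases hc : 3 * c + 2 = 0
    · have hb : b = 0 := by
        have : (3 : K) ^ 3 * b ^ 2 = 0 := by
          linear_combination hcurve - 4 * (3 * c - 1) * (3 * c + 2) * hc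
        simpa [h3] using this
      exact ⟨1, by linear_combination hb - hc, by linear_combination -hc⟩
    · have hD : 3 + 6 * c - (-1) ≠ 0 := by
        convert mul_ne_zero h2 hc using 1
        ring
      exact exists_fixedPoint_of_multiplier_curve h3 hD (by linear_combination hcurve)

end Field

/-- For real parameters `a ≥ 0` and `b`, the cubic `g_{a,b}(z) = -z^3 - 3a^2 z + b`
has a fixed point of multiplier `-1` (the multiplier being `g'_{a,b}(z) = -3z^2 - 3a^2`)
if and only if `4(3a^2 - 1)(3a^2 + 2)^2 + 27 b^2 = 0`. -/
theorem per_one_neg_one_curve (a b : ℝ) (ha : 0 ≤ a) :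
    (∃ z : ℂ, (-z ^ 3 - 3 * (a : ℂ) ^ 2 * z + (b : ℂ) = z) ∧
      (-3 * z ^ 2 - 3 * (a : ℂ) ^ 2 = -1)) ↔
    4 * (3 * a ^ 2 - 1) * (3 * a ^ 2 + 2) ^ 2 + 27 * b ^ 2 = 0 := by
  have h := per_one_neg_one_curve_general two_ne_zero (b : ℂ) ((a : ℂ) ^ 2)
  exact_mod_cast h
end

section
/- For all real a ≥ 0 and real b, the unique real fixed point x of g_{a,b} is attracting, i.e. |g_{a,b}'(x)| < 1, if and only if 27b² < −4(3a² − 1)(3a² + 2)²; in particular this forces a < 1/√3. -/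
/-!
With `c = 3a²`, a real fixed point `x` of `z ↦ -z³ - cz + b` satisfies `b² = F(x²)`, where
`F(t) = t (t + c + 1)²`, and is attracting exactly when `x² < (1 - c) / 3`. As `F` is strictly
increasing on `[-(c + 1) / 3, ∞)`, which contains both `x²` and `(1 - c) / 3`, attraction amounts
to `b² < F((1 - c) / 3) = 4 (1 - c) (c + 2)² / 27`.
-/

section OrderedField

variable {K : Type*} [Field K] [LinearOrder K] [IsStrictOrderedRing K]

theorem strictMonoOn_mul_add_sq {q : K} (hq : 0 ≤ q) :
    StrictMonoOn (fun t : K => t * (t + q) ^ 2) (Set.Ici (-(q / 3))) := by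
  -- Centring at the critical point `-(q / 3)` leaves only nonnegative non-constant coefficients.
  have centred (t : K) :
      t * (t + q) ^ 2 = (t + q / 3) ^ 2 * (t + q / 3 + q) - 4 * q ^ 3 / 27 := by ring
  intro s hs t _ hst
  have hs₀ : 0 ≤ s + q / 3 := neg_le_iff_add_nonneg.mp hs
  have hst' : s + q / 3 < t + q / 3 := by gcongr
  simp only [centred]
  exact sub_lt_sub_right
    (mul_lt_mul'' (pow_lt_pow_left₀ hst' hs₀ two_ne_zero) (by gcongr) (sq_nonneg _)
      (add_nonneg hs₀ hq)) _

theorem abs_neg_three_mul_sq_sub_lt_one_iff {c : K} (hc : -1 < c) (x : K) :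
    |-3 * x ^ 2 - c| < 1 ↔ x ^ 2 < (1 - c) / 3 := by
  have hx : 0 ≤ x ^ 2 := sq_nonneg x
  rw [abs_lt]
  constructor
  · rintro ⟨hlower, -⟩
    linarith
  · intro h
    constructor <;> linarith

theorem sq_eq_of_cubic_fixed_point {R : Type*} [CommRing R] {c b x : R}
    (hfix : -x ^ 3 - c * x + b = x) :
    b ^ 2 = x ^ 2 * (x ^ 2 + (c + 1)) ^ 2 := by
  have hb : b = x * (x ^ 2 + (c + 1)) := by linear_combination hfix
  rw [hb, mul_pow]

theorem real_fixed_point_attracting_iff_general {c b x : K} (hc : -1 < c)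
    (hfix : -x ^ 3 - c * x + b = x) :
    (|-3 * x ^ 2 - c| < 1 ↔ 27 * b ^ 2 < -4 * (c - 1) * (c + 2) ^ 2) ∧
    (|-3 * x ^ 2 - c| < 1 → c < 1) := by
  have hx : 0 ≤ x ^ 2 := sq_nonneg x
  have hmultiplier := abs_neg_three_mul_sq_sub_lt_one_iff hc x
  have hx_mem : x ^ 2 ∈ Set.Ici (-((c + 1) / 3)) := by rw [Set.mem_Ici]; linarith
  have hbound_mem : (1 - c) / 3 ∈ Set.Ici (-((c + 1) / 3)) := by rw [Set.mem_Ici]; linarith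
  have hmono := strictMonoOn_mul_add_sq (q := c + 1) (by linarith)
  have hbound : -4 * (c - 1) * (c + 2) ^ 2
      = 27 * ((1 - c) / 3 * ((1 - c) / 3 + (c + 1)) ^ 2) := by ring
  constructor
  · calc |-3 * x ^ 2 - c| < 1
        ↔ x ^ 2 < (1 - c) / 3 := hmultiplier
      _ ↔ x ^ 2 * (x ^ 2 + (c + 1)) ^ 2 < (1 - c) / 3 * ((1 - c) / 3 + (c + 1)) ^ 2 :=
          (hmono.lt_iff_lt hx_mem hbound_mem).symm
      _ ↔ 27 * b ^ 2 < -4 * (c - 1) * (c + 2) ^ 2 := by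
          rw [hbound, sq_eq_of_cubic_fixed_point hfix, mul_lt_mul_iff_right₀ (by norm_num)]
  · intro h
    linarith [hmultiplier.mp h]

end OrderedField

theorem lt_one_div_sqrt_of_mul_sq_lt_one {r a : ℝ} (hr : 0 < r) (h : r * a ^ 2 < 1) :
    a < 1 / √r := by
  rw [one_div, ← Real.sqrt_inv, ← one_div]
  exact Real.lt_sqrt_of_sq_lt ((lt_div_iff₀' hr).mpr h)

/-- For real parameters `a ≥ 0` and `b`, the (unique) real fixed point `x` of
`g_{a,b}(z) = -z^3 - 3a^2 z + b` is attracting, i.e. `|g'_{a,b}(x)| < 1` where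
`g'_{a,b}(x) = -3x^2 - 3a^2`, if and only if `27 b^2 < -4(3a^2-1)(3a^2+2)^2`;
in particular attractivity forces `a < 1/√3`. -/
theorem real_fixed_point_attracting_iff (a b x : ℝ) (ha : 0 ≤ a)
    (hfix : -x ^ 3 - 3 * a ^ 2 * x + b = x) :
    (|(-3 * x ^ 2 - 3 * a ^ 2)| < 1 ↔
      27 * b ^ 2 < -4 * (3 * a ^ 2 - 1) * (3 * a ^ 2 + 2) ^ 2) ∧
    (|(-3 * x ^ 2 - 3 * a ^ 2)| < 1 → a < 1 / Real.sqrt 3) := by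
  have ⟨hiff, hlt⟩ := real_fixed_point_attracting_iff_general (by linarith [sq_nonneg a]) hfix
  exact ⟨hiff, fun h => lt_one_div_sqrt_of_mul_sq_lt_one three_pos (hlt h)⟩
end

section
/- Let a₀ > 0 and b₀ ∈ ℝ, and suppose that for some integer n ≥ 1 one has g_{a₀,b₀}^{∘n}(ia₀) = −ia₀ (so that both critical points ±ia₀ of g_{a₀,b₀} are superattracting periodic points). Then the intersection of the filled Julia set K(g_{a₀,b₀}) with the real line is exactly the singleton {x₀}, where x₀ is the unique real fixed point of g_{a₀,b₀}. -/
/-- The real cubic polynomial `g_{a,b}(z) = -z^3 - 3a^2 z + b`. -/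
def gcubic (a b : ℝ) : ℂ → ℂ := fun z => -z ^ 3 - 3 * (a : ℂ) ^ 2 * z + (b : ℂ)

/-!
Let `p` be a real polynomial of degree at least two whose critical orbits stay at distance at least
`δ > 0` from the real line. A disc of radius `δ` around a real point contains no critical value of
an iterate `p^[k]`, so `p^[k]` has holomorphic inverse branches there. Points far from the origin
escape, so these branches are bounded uniformly in `k`, and Schwarz's lemma bounds their derivatives
from above, that is, `|(p^[k])'|` from below on bounded real orbits.

On the real line `p` is injective, hence `p^[2]` is increasing and bounded orbits of `p^[2]`
converge. As the iterates do not contract, such an orbit is constant. Thus the real points of the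
filled Julia set have period two, so there are finitely many of them; but by monotonicity they form
an interval, which must then be a single point.
-/

open Function Set Metric Filter Topology Polynomial Bornology ComplexConjugate

/-- The points whose forward orbit under `f` is bounded. For a polynomial map of `ℂ` this is the
filled Julia set. -/
def boundedOrbits {X : Type*} [Bornology X] (f : X → X) : Set X :=
  {x | IsBounded (range fun k => f^[k] x)}

section Iteration

theorem mem_boundedOrbits_of_isFixedPt {X : Type*} [Bornology X] {f : X → X} {x : X}
    (hx : IsFixedPt f x) : x ∈ boundedOrbits f := by
  have hconst : (fun k => f^[k] x) = fun _ => x := funext fun k => hx.iterate k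
  simp [boundedOrbits, hconst]

theorem mem_boundedOrbits_iff_exists_norm_le {E : Type*} [SeminormedAddCommGroup E] {f : E → E}
    {x : E} : x ∈ boundedOrbits f ↔ ∃ M, ∀ k, ‖f^[k] x‖ ≤ M := by
  simp [boundedOrbits, isBounded_iff_forall_norm_le]

theorem map_mem_boundedOrbits_iff {E F : Type*} [SeminormedAddCommGroup E]
    [SeminormedAddCommGroup F] {φ : E → F} {f : E → E} {g : F → F} (hφ : ∀ x, ‖φ x‖ = ‖x‖)
    (h : Semiconj φ f g) {x : E} : φ x ∈ boundedOrbits g ↔ x ∈ boundedOrbits f := by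
  simp only [mem_boundedOrbits_iff_exists_norm_le, ← (h.iterate_right _).eq, hφ]

theorem exists_pos_forall_le_iterate_of_isPeriodicPt {X : Type*} {f : X → X} {n : ℕ} {x : X}
    (hn : 0 < n) (hx : IsPeriodicPt f n x) {φ : X → ℝ} (hφ : ∀ k, 0 < φ (f^[k] x)) :
    ∃ δ > 0, ∀ k, δ ≤ φ (f^[k] x) := by
  obtain ⟨m, -, hmin⟩ := Finset.exists_min_image (Finset.range n) (fun k => φ (f^[k] x))
    ⟨0, Finset.mem_range.2 hn⟩
  refine ⟨φ (f^[m] x), hφ m, fun k => ?_⟩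
  rw [← hx.iterate_mod_apply k]
  exact hmin _ (Finset.mem_range.2 (Nat.mod_lt k hn))

theorem im_ne_zero_of_im_iterate_ne_zero {f : ℂ → ℂ} (hf : Semiconj conj f f) {z : ℂ} {k : ℕ}
    (h : (f^[k] z).im ≠ 0) : z.im ≠ 0 := by
  contrapose! h
  rw [← Complex.conj_eq_iff_im] at h ⊢
  rw [(hf.iterate_right k).eq, h]

theorem exists_pos_forall_le_abs_im_of_isPeriodicPt {f : ℂ → ℂ} (hf : Semiconj conj f f) {n : ℕ}
    {z : ℂ} (hn : 0 < n) (hz : IsPeriodicPt f n z) (him : z.im ≠ 0) :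
    ∃ δ > 0, ∀ k, δ ≤ |(f^[k] z).im| := by
  refine exists_pos_forall_le_iterate_of_isPeriodicPt hn hz (φ := fun w => |w.im|) fun k => ?_
  have hreturn : f^[n * k - k] (f^[k] z) = z := by
    rw [← iterate_add_apply, Nat.sub_add_cancel (Nat.le_mul_of_pos_left k hn)]
    exact hz.mul_const k
  exact abs_pos.2 (im_ne_zero_of_im_iterate_ne_zero hf (hreturn.symm ▸ him))

end Iteration

section RealMaps

variable {f : ℝ → ℝ}

theorem injective_of_deriv_ne_zero (hf : ∀ x, deriv f x ≠ 0) : Injective f := by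
  have hcont : Continuous f :=
    continuous_iff_continuousAt.2 fun x => (differentiableAt_of_deriv_ne_zero (hf x)).continuousAt
  refine Injective.of_lt_imp_ne fun u v huv heq => ?_
  obtain ⟨ξ, -, hξ⟩ := exists_deriv_eq_zero huv hcont.continuousOn heq
  exact hf ξ hξ

theorem mul_abs_sub_le_abs_image_sub (hf : Differentiable ℝ f) {c u v : ℝ}
    (hc : ∀ x ∈ uIcc u v, c ≤ |deriv f x|) : c * |v - u| ≤ |f v - f u| := by
  wlog huv : u ≤ v generalizing u v
  · rw [abs_sub_comm, abs_sub_comm (f v)]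
    exact this (by rwa [uIcc_comm]) (le_of_not_ge huv)
  rcases huv.eq_or_lt with rfl | huv
  · simp
  obtain ⟨ξ, hξ, hslope⟩ :=
    exists_deriv_eq_slope f huv hf.continuous.continuousOn hf.differentiableOn
  have hle := hc ξ (Icc_subset_uIcc (Ioo_subset_Icc_self hξ))
  rwa [hslope, abs_div, le_div_iff₀ (abs_pos.2 (sub_pos.2 huv).ne')] at hle

theorem iterate_mem_uIcc (hf : Continuous f) (hinj : Injective f) {x u v : ℝ} (hx : x ∈ uIcc u v)
    (k : ℕ) : f^[k] x ∈ uIcc (f^[k] u) (f^[k] v) := by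
  rcases (hf.iterate k).strictMono_of_inj (hinj.iterate k) with h | h
  · exact h.monotone.mapsTo_uIcc hx
  · exact h.antitone.mapsTo_uIcc hx

theorem abs_iterate_le_of_mem_uIcc (hf : Continuous f) (hinj : Injective f) {x u v M : ℝ}
    (hx : x ∈ uIcc u v) {k : ℕ} (hu : |f^[k] u| ≤ M) (hv : |f^[k] v| ≤ M) : |f^[k] x| ≤ M :=
  abs_le.2 <| ordConnected_Icc.uIcc_subset (abs_le.1 hu) (abs_le.1 hv) <|
    iterate_mem_uIcc hf hinj hx k

theorem ordConnected_boundedOrbits (hf : Continuous f) (hinj : Injective f) :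
    (boundedOrbits f).OrdConnected := by
  refine ordConnected_iff_uIcc_subset.2 fun u hu v hv x hx => ?_
  obtain ⟨M, hM⟩ := mem_boundedOrbits_iff_exists_norm_le.1 hu
  obtain ⟨N, hN⟩ := mem_boundedOrbits_iff_exists_norm_le.1 hv
  exact mem_boundedOrbits_iff_exists_norm_le.2 ⟨max M N, fun k => abs_iterate_le_of_mem_uIcc hf hinj
    hx ((hM k).trans (le_max_left M N)) ((hN k).trans (le_max_right M N))⟩

theorem strictMono_iterate_two (hf : Continuous f) (hinj : Injective f) : StrictMono f^[2] := by
  rcases hf.strictMono_of_inj hinj with h | h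
  · exact h.comp h
  · exact h.comp h

theorem exists_tendsto_iterate_of_mem_boundedOrbits (hf : Monotone f) {x : ℝ}
    (hx : x ∈ boundedOrbits f) : ∃ l, Tendsto (fun k => f^[k] x) atTop (𝓝 l) := by
  rcases le_total x (f x) with h | h
  · exact ⟨_, tendsto_atTop_ciSup (hf.monotone_iterate_of_le_map h) (IsBounded.bddAbove hx)⟩
  · exact ⟨_, tendsto_atTop_ciInf (hf.antitone_iterate_of_map_le h) (IsBounded.bddBelow hx)⟩

theorem boundedOrbits_subset_ptsOfPeriod_two (hf : Differentiable ℝ f) (hinj : Injective f)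
    (hexp : ∀ M, ∃ c > 0, ∀ k x, |f^[k] x| ≤ M → c ≤ |deriv f^[k] x|) :
    boundedOrbits f ⊆ ptsOfPeriod f 2 := by
  intro u hu
  obtain ⟨M, hM⟩ := mem_boundedOrbits_iff_exists_norm_le.1 hu
  obtain ⟨c, hc, hderiv⟩ := hexp M
  have hsep (k : ℕ) : c * |f^[2] u - u| ≤ |(f^[2])^[k + 1] u - (f^[2])^[k] u| := by
    rw [iterate_succ_apply (f^[2]) k u, ← iterate_mul]
    refine mul_abs_sub_le_abs_image_sub (hf.iterate _) fun x hx => hderiv _ x ?_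
    refine abs_iterate_le_of_mem_uIcc hf.continuous hinj hx (hM _) ?_
    rw [← iterate_add_apply]
    exact hM _
  obtain ⟨l, hl⟩ := exists_tendsto_iterate_of_mem_boundedOrbits
    (strictMono_iterate_two hf.continuous hinj).monotone (x := u)
    (mem_boundedOrbits_iff_exists_norm_le.2 ⟨M, fun k => by simpa only [← iterate_mul] using hM _⟩)
  have hlim : Tendsto (fun k => |(f^[2])^[k + 1] u - (f^[2])^[k] u|) atTop (𝓝 0) := by
    simpa using ((hl.comp (tendsto_add_atTop_nat 1)).sub hl).abs
  have hzero : c * |f^[2] u - u| ≤ 0 := ge_of_tendsto' hlim hsep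
  exact sub_eq_zero.1 (abs_nonpos_iff.1 (nonpos_of_mul_nonpos_right hzero hc))

end RealMaps

section Polynomials

theorem eval_iterate_comp_X {R : Type*} [CommSemiring R] (p : R[X]) (k : ℕ) (x : R) :
    (p.comp^[k] X).eval x = p.eval^[k] x := by
  rw [iterate_comp_eval, eval_X]

theorem map_iterate_comp_X {R S : Type*} [Semiring R] [Semiring S] (f : R →+* S)
    (p : R[X]) (k : ℕ) : (p.comp^[k] X).map f = (p.map f).comp^[k] X := by
  have h : Semiconj (Polynomial.map f) p.comp (p.map f).comp := fun q => Polynomial.map_comp f p q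
  rw [(h.iterate_right k).eq, map_X]

theorem finite_ptsOfPeriod_eval {R : Type*} [CommRing R] [IsDomain R] {p : R[X]}
    (hp : 2 ≤ p.natDegree) {n : ℕ} (hn : n ≠ 0) : (ptsOfPeriod p.eval n).Finite := by
  have hdeg : (X : R[X]).natDegree < (p.comp^[n] X).natDegree := by
    simpa using Nat.one_lt_pow hn hp
  have hne : p.comp^[n] X - X ≠ 0 := sub_ne_zero.2 fun h => hdeg.ne' (congrArg natDegree h)
  refine (finite_setOfPred_isRoot hne).subset fun x hx => ?_
  simpa [IsRoot, sub_eq_zero] using (mem_ptsOfPeriod.1 hx).eq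

theorem exists_isRoot_derivative_of_isRoot_derivative_iterate_comp {R : Type*} [CommSemiring R]
    [IsDomain R] {p : R[X]} {k : ℕ} {z : R} (hz : (derivative (p.comp^[k] X)).IsRoot z) :
    ∃ c, p.derivative.IsRoot c ∧ ∃ j, p.eval^[k] z = p.eval^[j] c := by
  induction k with
  | zero => simp at hz
  | succ k ih =>
    rw [iterate_succ_apply', derivative_comp, IsRoot, eval_mul, mul_eq_zero] at hz
    rcases hz with hz | hz
    · obtain ⟨c, hc, j, hj⟩ := ih hz
      exact ⟨c, hc, j + 1, by rw [iterate_succ_apply', hj, iterate_succ_apply']⟩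
    · rw [eval_comp, eval_iterate_comp_X] at hz
      exact ⟨_, hz, 1, iterate_succ_apply' ..⟩

theorem eventually_norm_lt_norm_eval {𝕜 : Type*} [NormedField 𝕜] {p : 𝕜[X]}
    (hp : 2 ≤ p.natDegree) : ∀ᶠ z in cobounded 𝕜, ‖z‖ < ‖p.eval z‖ := by
  have hdeg : 0 < p.divX.degree :=
    natDegree_pos_iff_degree_pos.1 (by rw [natDegree_divX_eq_natDegree_tsub_one]; omega)
  filter_upwards [(p.divX.tendsto_norm_atTop hdeg tendsto_norm_cobounded_atTop).eventually_ge_atTop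
    2, tendsto_norm_cobounded_atTop.eventually_gt_atTop ‖p.coeff 0‖] with z hquot hz
  calc ‖z‖ < 2 * ‖z‖ - ‖p.coeff 0‖ := by linarith
    _ ≤ ‖p.divX.eval z * z‖ - ‖p.coeff 0‖ := by rw [norm_mul]; gcongr
    _ ≤ ‖p.divX.eval z * z + p.coeff 0‖ := norm_sub_le_norm_add _ _
    _ = ‖p.eval z‖ := by conv_rhs => rw [← p.divX_mul_X_add]; simp

theorem exists_forall_norm_le_of_norm_eval_iterate_le {𝕜 : Type*} [NormedField 𝕜] {p : 𝕜[X]}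
    (hp : 2 ≤ p.natDegree) : ∃ R, ∀ r ≥ R, ∀ k z, ‖p.eval^[k] z‖ ≤ r → ‖z‖ ≤ r := by
  obtain ⟨R, -, hR⟩ := hasBasis_cobounded_norm.eventually_iff.1 (eventually_norm_lt_norm_eval hp)
  refine ⟨R, fun r hr k z => ?_⟩
  contrapose!
  have hmaps : MapsTo p.eval {z | r < ‖z‖} {z | r < ‖z‖} :=
    fun w hw => lt_trans hw (hR (hr.trans (le_of_lt hw)))
  exact fun hz => hmaps.iterate k hz

theorem exists_inverse_branch_eval {p : ℂ[X]} {U : Set ℂ} (hU : IsSimplyConnected U)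
    (hUo : IsOpen U) (hcrit : ∀ z, p.derivative.IsRoot z → p.eval z ∉ U) {x : ℂ}
    (hx : p.eval x ∈ U) :
    ∃ H : ℂ → ℂ, H (p.eval x) = x ∧ ∀ w ∈ U, p.eval (H w) = w ∧
      HasDerivAt H (p.derivative.eval (H w))⁻¹ w := by
  have := hU.simplyConnectedSpace
  have := hUo.locallyPathConnectedSpace
  obtain ⟨F, ⟨hFx, hF⟩, -⟩ := p.isCoveringMapOn_eval.existsUnique_continuousMap_lifts
    (f := ⟨((↑) : U → ℂ), continuous_subtype_val⟩) (a₀ := ⟨p.eval x, hx⟩) (e₀ := x) rfl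
    (fun w ⟨z, hz, hzw⟩ => hcrit z hz (by rw [show p.eval z = w from hzw]; exact w.2))
  obtain ⟨H, hH⟩ : ∃ H : ℂ → ℂ, ∀ w : U, H w = F w :=
    ⟨extend (↑) F 0, fun w => Subtype.val_injective.extend_apply _ _ w⟩
  have hinv : ∀ w ∈ U, p.eval (H w) = w := fun w hw => by
    rw [hH ⟨w, hw⟩]
    exact congrFun hF ⟨w, hw⟩
  have hcont : ContinuousOn H U := continuousOn_iff_continuous_domRestrict.2
    ((funext hH : U.domRestrict H = F) ▸ F.continuous)
  refine ⟨H, by rw [hH ⟨_, hx⟩, hFx], fun w hw => ⟨hinv w hw, ?_⟩⟩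
  refine (p.hasDerivAt (H w)).of_local_left_inverse (hcont.continuousAt (hUo.mem_nhds hw)) ?_
    (eventually_of_mem (hUo.mem_nhds hw) hinv)
  exact fun h => hcrit _ h ((hinv w hw).symm ▸ hw)

theorem div_le_norm_eval_derivative {p : ℂ[X]} {x : ℂ} {r R : ℝ} (hr : 0 < r)
    (hcrit : ∀ z, p.derivative.IsRoot z → p.eval z ∉ ball (p.eval x) r)
    (hpre : p.eval ⁻¹' ball (p.eval x) r ⊆ closedBall x R) : r / R ≤ ‖p.derivative.eval x‖ := by
  have hx : p.eval x ∈ ball (p.eval x) r := mem_ball_self hr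
  have hball : IsSimplyConnected (ball (p.eval x) r) :=
    have := (convex_ball (p.eval x) r).contractibleSpace ⟨_, hx⟩
    SimplyConnectedSpace.ofContractible _
  obtain ⟨H, hHx, hH⟩ := exists_inverse_branch_eval hball isOpen_ball hcrit hx
  have hschwarz : ‖deriv H (p.eval x)‖ ≤ R / r := by
    refine Complex.norm_deriv_le_div_of_mapsTo_ball
      (fun w hw => (hH w hw).2.differentiableAt.differentiableWithinAt) (fun w hw => ?_) hr
    rw [hHx]
    exact hpre (by rwa [mem_preimage, (hH w hw).1])
  have hne : p.derivative.eval x ≠ 0 := fun h => hcrit x h hx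
  rw [(hH _ hx).2.deriv, hHx, norm_inv] at hschwarz
  simpa using inv_anti₀ (by positivity) hschwarz

theorem exists_pos_forall_le_norm_eval_derivative_iterate_comp {p : ℂ[X]} (hp : 2 ≤ p.natDegree)
    {δ : ℝ} (hδ : 0 < δ) (M : ℝ) :
    ∃ c > 0, ∀ k x, ‖p.eval^[k] x‖ ≤ M →
      (∀ z, p.derivative.IsRoot z → ∀ j, δ ≤ dist (p.eval^[j] z) (p.eval^[k] x)) →
      c ≤ ‖(derivative (p.comp^[k] X)).eval x‖ := by
  obtain ⟨R, hR⟩ := exists_forall_norm_le_of_norm_eval_iterate_le hp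
  set r := max R (|M| + δ)
  have hr : |M| + δ ≤ r := le_max_right _ _
  have hrpos : 0 < r := by linarith [abs_nonneg M]
  refine ⟨δ / (r + r), div_pos hδ (add_pos hrpos hrpos), fun k x hx hcrit =>
    div_le_norm_eval_derivative hδ ?_ ?_⟩
  · intro z hz
    obtain ⟨c, hc, j, hj⟩ := exists_isRoot_derivative_of_isRoot_derivative_iterate_comp hz
    rw [eval_iterate_comp_X, eval_iterate_comp_X, hj, mem_ball, not_lt]
    exact hcrit c hc j
  · have hxr : ‖x‖ ≤ r := hR r (le_max_left _ _) k x (by linarith [le_abs_self M])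
    intro w hw
    simp only [mem_preimage, eval_iterate_comp_X, mem_ball] at hw
    have hwr : ‖w‖ ≤ r := hR r (le_max_left _ _) k w <| calc
      ‖p.eval^[k] w‖ ≤ ‖p.eval^[k] x‖ + dist (p.eval^[k] w) (p.eval^[k] x) := by
        rw [dist_eq_norm]; exact norm_le_norm_add_norm_sub' _ _
      _ ≤ r := by linarith [le_abs_self M]
    exact (dist_le_norm_add_norm w x).trans (add_le_add hwr hxr)

end Polynomials

section RealPolynomials

theorem semiconj_ofReal_eval_aeval (p : ℝ[X]) :
    Semiconj ((↑) : ℝ → ℂ) p.eval (fun w : ℂ => aeval w p) :=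
  fun x => (aeval_ofReal p x).symm

theorem semiconj_conj_aeval (p : ℝ[X]) :
    Semiconj (conj : ℂ → ℂ) (fun w => aeval w p) (fun w => aeval w p) :=
  fun z => (aeval_conj p z).symm

theorem abs_im_le_dist_ofReal (z : ℂ) (x : ℝ) : |z.im| ≤ dist z x := by
  simpa [dist_eq_norm] using Complex.abs_im_le_norm (z - x)

variable {p : ℝ[X]}

theorem exists_pos_forall_le_abs_deriv_iterate_eval (hp : 2 ≤ p.natDegree) {δ : ℝ} (hδ : 0 < δ)
    (hcrit : ∀ z : ℂ, aeval z (derivative p) = 0 → ∀ k,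
      δ ≤ |((fun w : ℂ => aeval w p)^[k] z).im|) (M : ℝ) :
    ∃ c > 0, ∀ k x, |p.eval^[k] x| ≤ M → c ≤ |deriv p.eval^[k] x| := by
  set P : ℂ[X] := p.map (algebraMap ℝ ℂ)
  have heval : P.eval = fun w : ℂ => aeval w p := funext fun w => eval_map_algebraMap p w
  have hreal (k : ℕ) (x : ℝ) : ((p.eval^[k] x : ℝ) : ℂ) = P.eval^[k] x := by
    rw [heval, ((semiconj_ofReal_eval_aeval p).iterate_right k).eq]
  obtain ⟨c, hc, hbound⟩ := exists_pos_forall_le_norm_eval_derivative_iterate_comp (p := P)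
    (by rwa [natDegree_map]) hδ M
  refine ⟨c, hc, fun k x hx => ?_⟩
  have hderiv : deriv p.eval^[k] x = (derivative (p.comp^[k] X)).eval x := by
    rw [← Polynomial.deriv, ← funext (eval_iterate_comp_X p k)]
  have hnorm : ‖(derivative (P.comp^[k] X)).eval (x : ℂ)‖ = |deriv p.eval^[k] x| := by
    rw [← map_iterate_comp_X, derivative_map, eval_map_algebraMap, hderiv]
    exact (congrArg norm (aeval_ofReal _ x)).trans (Complex.norm_real _)
  rw [← hnorm]
  refine hbound k x (by rwa [← hreal, Complex.norm_real]) fun z hz j => ?_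
  rw [← hreal, heval]
  refine (hcrit z ?_ j).trans (abs_im_le_dist_ofReal _ _)
  rwa [IsRoot, derivative_map, eval_map_algebraMap] at hz

theorem subsingleton_boundedOrbits_eval (hp : 2 ≤ p.natDegree) {δ : ℝ} (hδ : 0 < δ)
    (hcrit : ∀ z : ℂ, aeval z (derivative p) = 0 → ∀ k,
      δ ≤ |((fun w : ℂ => aeval w p)^[k] z).im|) : (boundedOrbits p.eval).Subsingleton := by
  have hinj : Injective p.eval := injective_of_deriv_ne_zero fun x hx => by
    have hroot : aeval (x : ℂ) (derivative p) = 0 := by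
      rw [Polynomial.deriv] at hx
      exact (aeval_ofReal _ x).trans (by rw [hx]; rfl)
    exact hδ.not_ge (by simpa using hcrit x hroot 0)
  have hfin : (boundedOrbits p.eval).Finite :=
    (finite_ptsOfPeriod_eval hp two_ne_zero).subset <|
      boundedOrbits_subset_ptsOfPeriod_two p.differentiable hinj
        (exists_pos_forall_le_abs_deriv_iterate_eval hp hδ hcrit)
  by_contra hnon
  exact (ordConnected_boundedOrbits p.continuous hinj).isPreconnected.infinite_of_nontrivial
    (not_subsingleton_iff.1 hnon) hfin

theorem filledJulia_inter_real_eq_fixed_general (hp : 2 ≤ p.natDegree) {δ : ℝ}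
    (hδ : 0 < δ) (hcrit : ∀ z : ℂ, aeval z (derivative p) = 0 → ∀ k,
      δ ≤ |((fun w : ℂ => aeval w p)^[k] z).im|) {x₀ : ℝ} (hfix : aeval (x₀ : ℂ) p = (x₀ : ℂ)) :
    {z : ℂ | z.im = 0 ∧ IsBounded (range fun k => (fun w : ℂ => aeval w p)^[k] z)} =
      {(x₀ : ℂ)} := by
  have hsemi := semiconj_ofReal_eval_aeval p
  have hiff (x : ℝ) : (x : ℂ) ∈ boundedOrbits (fun w : ℂ => aeval w p) ↔
      x ∈ boundedOrbits p.eval := map_mem_boundedOrbits_iff Complex.norm_real hsemi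
  have hx₀ : (x₀ : ℂ) ∈ boundedOrbits (fun w : ℂ => aeval w p) :=
    mem_boundedOrbits_of_isFixedPt hfix
  refine Subset.antisymm ?_ (singleton_subset_iff.2 ⟨Complex.ofReal_im x₀, hx₀⟩)
  rintro z ⟨hreal, hz⟩
  lift z to ℝ using hreal
  rw [subsingleton_boundedOrbits_eval hp hδ hcrit ((hiff z).1 hz) ((hiff x₀).1 hx₀)]
  rfl

end RealPolynomials

section Cubic

/-- `gcubic a b` as a polynomial with real coefficients. -/
noncomputable def gcubicPoly (a b : ℝ) : ℝ[X] := -X ^ 3 - C (3 * a ^ 2) * X + C b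

variable (a b : ℝ)

theorem gcubic_eq_aeval : gcubic a b = fun w : ℂ => aeval w (gcubicPoly a b) := by
  ext w
  simp [gcubic, gcubicPoly]

theorem natDegree_gcubicPoly : (gcubicPoly a b).natDegree = 3 := by
  unfold gcubicPoly
  compute_degree!

theorem semiconj_conj_gcubic : Semiconj conj (gcubic a b) (gcubic a b) := by
  rw [gcubic_eq_aeval]
  exact semiconj_conj_aeval _

variable {a b}

theorem eq_or_eq_conj_of_aeval_derivative_gcubicPoly_eq_zero {z : ℂ}
    (hz : aeval z (derivative (gcubicPoly a b)) = 0) :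
    z = Complex.I * a ∨ z = conj (Complex.I * (a : ℂ)) := by
  have hderiv : derivative (gcubicPoly a b) = -(C 3 * X ^ 2) - C (3 * a ^ 2) := by
    simp only [gcubicPoly, derivative_add, derivative_sub, derivative_neg, derivative_X_pow,
      derivative_C_mul_X, derivative_C, add_zero]
    norm_num
  have hquad : -(3 * z ^ 2) - 3 * (a : ℂ) ^ 2 = 0 := by
    simpa only [hderiv, map_sub, map_neg, map_mul, map_pow, aeval_X, aeval_C,
      Complex.coe_algebraMap, Complex.ofReal_ofNat, map_ofNat] using hz
  have hsq : z ^ 2 = (Complex.I * a) ^ 2 := by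
    linear_combination -(1 / 3) * hquad - a ^ 2 * Complex.I_sq
  simpa using sq_eq_sq_iff_eq_or_eq_neg.1 hsq

theorem exists_pos_forall_le_abs_im_gcubic_iterate {n : ℕ} (ha : a ≠ 0) (hn : 0 < n)
    (hper : (gcubic a b)^[n] (Complex.I * a) = -(Complex.I * a)) :
    ∃ δ > 0, ∀ z : ℂ, aeval z (derivative (gcubicPoly a b)) = 0 → ∀ k,
      δ ≤ |((gcubic a b)^[k] z).im| := by
  have hsymm := semiconj_conj_gcubic a b
  have hconj : conj (Complex.I * (a : ℂ)) = -(Complex.I * a) := by simp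
  have hperiodic : IsPeriodicPt (gcubic a b) (n + n) (Complex.I * a) := by
    rw [IsPeriodicPt, IsFixedPt, iterate_add_apply, hper, ← hconj, ← (hsymm.iterate_right n).eq,
      hper, map_neg, hconj, neg_neg]
  obtain ⟨δ, hδ, hbound⟩ := exists_pos_forall_le_abs_im_of_isPeriodicPt hsymm
    (Nat.add_pos_left hn n) hperiodic (by simpa using ha)
  refine ⟨δ, hδ, fun z hz k => ?_⟩
  rcases eq_or_eq_conj_of_aeval_derivative_gcubicPoly_eq_zero hz with rfl | rfl
  · exact hbound k
  · rw [← (hsymm.iterate_right k).eq, Complex.conj_im, abs_neg]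
    exact hbound k

end Cubic

/-- If `a₀ > 0`, `b₀ ∈ ℝ` and for some `n ≥ 1` the critical point `i a₀` of
`g_{a₀,b₀}` satisfies `g_{a₀,b₀}^{∘n}(i a₀) = -i a₀` (so both critical points are
superattracting periodic points), then the filled Julia set of `g_{a₀,b₀}` meets
the real line exactly in the unique real fixed point `x₀`. -/
theorem filledJulia_inter_real_eq_fixed (a₀ b₀ : ℝ) (ha : 0 < a₀) (n : ℕ) (hn : 1 ≤ n)
    (hper : (gcubic a₀ b₀)^[n] (Complex.I * (a₀ : ℂ)) = -(Complex.I * (a₀ : ℂ)))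
    (x₀ : ℝ) (hfix : gcubic a₀ b₀ (x₀ : ℂ) = (x₀ : ℂ)) :
    {z : ℂ | z.im = 0 ∧
      Bornology.IsBounded (Set.range fun k => (gcubic a₀ b₀)^[k] z)} = {(x₀ : ℂ)} := by
  obtain ⟨δ, hδ, hcrit⟩ := exists_pos_forall_le_abs_im_gcubic_iterate ha.ne' hn hper
  rw [gcubic_eq_aeval] at hcrit hfix ⊢
  exact filledJulia_inter_real_eq_fixed_general
    (by rw [natDegree_gcubicPoly]; norm_num) hδ hcrit hfix
end

section
/- Let g(z) = −z³ − (3/2)z (that is, g = g_{a,b} with (a,b) = (1/√2, 0)). For every real y with 0 < y < 1/√2, the sequence of even iterates g^{∘2n}(iy) converges to i/√2 as n → ∞. -/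
/-!
The imaginary axis is invariant: `g(ix) = -i h(x)` with `h` a real odd cubic, so the signs cancel
over two steps and `g^{∘2n}(iy) = i h^{∘2n}(y)`. On `(0, s)`, where `±is` is the 2-cycle of `g`,
the map `h` satisfies `x < h(x) ≤ s`; real orbits therefore increase, and their limit can only be
the fixed point `s`.
-/

open Filter Function Set Topology

theorem tendsto_iterate_of_mem_Ioc {α : Type*} [ConditionallyCompleteLinearOrder α]
    [TopologicalSpace α] [OrderTopology α] {f : α → α} {y s : α} (hys : y ≤ s)
    (hfix : IsFixedPt f s) (hcont : ∀ x ∈ Ico y s, ContinuousAt f x)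
    (hmap : ∀ x ∈ Ico y s, f x ∈ Ioc x s) :
    Tendsto (fun n => f^[n] y) atTop (𝓝 s) := by
  have le_map : ∀ x ∈ Icc y s, x ≤ f x ∧ f x ≤ s := by
    rintro x ⟨hyx, hxs⟩
    obtain rfl | hlt := hxs.eq_or_lt
    · exact ⟨hfix.ge, hfix.le⟩
    · exact ⟨(hmap x ⟨hyx, hlt⟩).1.le, (hmap x ⟨hyx, hlt⟩).2⟩
  have maps : MapsTo f (Icc y s) (Icc y s) := fun x hx =>
    ⟨hx.1.trans (le_map x hx).1, (le_map x hx).2⟩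
  have orbit_mem (n : ℕ) : f^[n] y ∈ Icc y s := maps.iterate n (left_mem_Icc.2 hys)
  have orbit_mono : Monotone fun n => f^[n] y := monotone_nat_of_le_succ fun n => by
    simpa only [iterate_succ_apply'] using (le_map _ (orbit_mem n)).1
  have orbit_tendsto := tendsto_atTop_ciSup orbit_mono
    ⟨s, forall_mem_range.2 fun n => (orbit_mem n).2⟩
  set l := ⨆ n, f^[n] y
  have limit_mem : l ∈ Icc y s :=
    isClosed_Icc.mem_of_tendsto orbit_tendsto (Eventually.of_forall orbit_mem)
  obtain hl | hl := limit_mem.2.eq_or_lt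
  · rwa [hl] at orbit_tendsto
  · have hmem : l ∈ Ico y s := ⟨limit_mem.1, hl⟩
    have limit_fixed : IsFixedPt f l := isFixedPt_of_tendsto_iterate orbit_tendsto (hcont l hmem)
    exact absurd limit_fixed (hmap l hmem).1.ne'

theorem iterate_two_mul_neg_of_odd {α : Type*} [InvolutiveNeg α] {f : α → α} (hf : f.Odd)
    (n : ℕ) : (fun x => -f x)^[2 * n] = f^[2 * n] := by
  have neg_commute : Function.Commute (Neg.neg : α → α) f := fun x => (hf x).symm
  calc (Neg.neg ∘ f)^[2 * n] = Neg.neg^[2 * n] ∘ f^[2 * n] := neg_commute.comp_iterate _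
    _ = f^[2 * n] := by rw [neg_involutive.iterate_two_mul, id_comp]

/-- The real cubic `h(x) = (1 + s²) x - x³`, which describes `g(z) = -z³ - (1 + s²) z` on the
imaginary axis through `g(ix) = -i h(x)`. It is parametrized by its fixed point `s`, which
corresponds to the 2-cycle `±is` of `g`; thus `1 + s² = 3a²` for `g = g_{a,0}`. -/
def axisCubic (s x : ℝ) : ℝ := (1 + s ^ 2) * x - x ^ 3

namespace axisCubic

variable {s x y : ℝ}

theorem odd (s : ℝ) : (axisCubic s).Odd := fun x => by
  simp only [axisCubic]
  ring

theorem continuous (s : ℝ) : Continuous (axisCubic s) := by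
  unfold axisCubic
  fun_prop

theorem isFixedPt (s : ℝ) : IsFixedPt (axisCubic s) s := by
  simp only [IsFixedPt, axisCubic]
  ring

theorem lt_apply (hx : 0 < x) (hxs : x < s) : x < axisCubic s x := by
  have hdiff : axisCubic s x - x = x * ((s - x) * (s + x)) := by
    simp only [axisCubic]
    ring
  have hpos : 0 < x * ((s - x) * (s + x)) :=
    mul_pos hx (mul_pos (sub_pos.2 hxs) (by linarith))
  linarith

theorem apply_le (hs : s ^ 2 ≤ 1 / 2) (hx : 0 ≤ x) (hxs : x ≤ s) : axisCubic s x ≤ s := by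
  have hdiff : s - axisCubic s x = (s - x) * (1 - s * x - x ^ 2) := by
    simp only [axisCubic]
    ring
  have hmul : s * x ≤ s ^ 2 := by
    rw [sq]
    exact mul_le_mul_of_nonneg_left hxs (hx.trans hxs)
  have hsq : x ^ 2 ≤ s ^ 2 := pow_le_pow_left₀ hx hxs 2
  have hfactor : 0 ≤ 1 - s * x - x ^ 2 := by linarith
  linarith [mul_nonneg (sub_nonneg.2 hxs) hfactor]

theorem tendsto_iterate (hs : s ^ 2 ≤ 1 / 2) (hy : 0 < y) (hys : y ≤ s) :
    Tendsto (fun n => (axisCubic s)^[n] y) atTop (𝓝 s) :=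
  tendsto_iterate_of_mem_Ioc hys (isFixedPt s) (fun _ _ => (continuous s).continuousAt)
    fun _ ⟨hyx, hxs⟩ =>
      have hx := hy.trans_le hyx
      ⟨lt_apply hx hxs, apply_le hs hx.le hxs.le⟩

theorem semiconj_I_mul (s : ℝ) :
    Semiconj (fun x : ℝ => Complex.I * x) (fun x => -axisCubic s x)
      fun z : ℂ => -z ^ 3 - (1 + s ^ 2) * z := fun x => by
  simp only [axisCubic, mul_pow, Complex.I_pow_three]
  push_cast
  ring

theorem iterate_two_mul_I_mul (s x : ℝ) (n : ℕ) :
    (fun z : ℂ => -z ^ 3 - (1 + s ^ 2) * z)^[2 * n] (Complex.I * x) =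
      Complex.I * ((axisCubic s)^[2 * n] x : ℝ) := by
  rw [← iterate_two_mul_neg_of_odd (odd s)]
  exact ((semiconj_I_mul s).iterate_right (2 * n) x).symm

end axisCubic

theorem even_iterates_converge_general {s y : ℝ} (hs : s ^ 2 ≤ 1 / 2) (hy : 0 < y) (hys : y ≤ s) :
    Tendsto (fun n => (fun z : ℂ => -z ^ 3 - (1 + s ^ 2) * z)^[2 * n] (Complex.I * y)) atTop
      (𝓝 (Complex.I * s)) := by
  simp only [axisCubic.iterate_two_mul_I_mul]
  have even_tendsto : Tendsto (fun n => (axisCubic s)^[2 * n] y) atTop (𝓝 s) :=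
    (axisCubic.tendsto_iterate hs hy hys).comp (tendsto_id.const_mul_atTop' two_pos)
  exact even_tendsto.ofReal.const_mul Complex.I

/-- For the cubic `g(z) = -z^3 - (3/2) z` (the center of the bitransitive
component, `(a,b) = (1/√2, 0)`), for every real `0 < y < 1/√2` the even iterates
`g^{∘2n}(iy)` converge to `i/√2`. -/
theorem even_iterates_converge (y : ℝ) (h0 : 0 < y) (h1 : y < 1 / Real.sqrt 2) :
    Filter.Tendsto
      (fun n => (fun z : ℂ => -z ^ 3 - (3 / 2) * z)^[2 * n] (Complex.I * (y : ℂ)))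
      Filter.atTop (nhds (Complex.I / (Real.sqrt 2 : ℂ))) := by
  have hs : (1 / Real.sqrt 2) ^ 2 = 1 / 2 := by simp
  have hcoeff : (1 + ((1 / Real.sqrt 2 : ℝ) : ℂ) ^ 2) = 3 / 2 := by
    rw [← Complex.ofReal_pow, hs]
    norm_num
  have hlimit : Complex.I * ((1 / Real.sqrt 2 : ℝ) : ℂ) = Complex.I / (Real.sqrt 2 : ℂ) := by
    simp [div_eq_mul_inv]
  simpa only [hcoeff, hlimit] using even_iterates_converge_general hs.le h0 h1.le
end

section
/- Let h : ℝ → ℝ be differentiable, and let p < q be real numbers with h(p) = p, h(q) = q, h'(p) > 1, h'(q) > 1, and h'(t) ≥ 0 for all t ∈ [p, q]. Then there exists x ∈ (p, q) with h(x) = x and |h'(x)| ≤ 1; that is, between two repelling fixed points of an order-preserving interval map there is a non-repelling fixed point. -/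
/-!
At a fixed point with derivative greater than `1` the graph of `h` crosses the diagonal from below
to above. So it is above the diagonal just to the right of `p` and below it just to the left of
`q`. At the *first* point `x` where it meets the diagonal in between, the graph is above the
diagonal on the left of `x`, which is incompatible with `h'(x) > 1`.
-/

open Filter Set Topology

theorem exists_first_eq_of_lt_of_le {α β : Type*} [ConditionallyCompleteLinearOrder α]
    [TopologicalSpace α] [OrderTopology α] [DenselyOrdered α] [LinearOrder β]
    [TopologicalSpace β] [OrderClosedTopology β] {f g : α → β} {a b : α} (hab : a ≤ b)
    (hf : ContinuousOn f (Icc a b)) (hg : ContinuousOn g (Icc a b))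
    (ha : f a < g a) (hb : g b ≤ f b) :
    ∃ x ∈ Ioc a b, f x = g x ∧ ∀ t ∈ Ico a x, f t < g t := by
  have hcompact : IsCompact {t ∈ Icc a b | g t ≤ f t} :=
    isCompact_Icc.of_isClosed_subset (isClosed_Icc.isClosed_le hg hf) (sep_subset _ _)
  obtain ⟨x, ⟨⟨hax, hxb⟩, hgf⟩, hleast⟩ :=
    hcompact.exists_isLeast ⟨b, right_mem_Icc.2 hab, hb⟩
  have hbefore : ∀ t ∈ Ico a x, f t < g t := fun t ht ↦
    lt_of_not_ge fun hle ↦ ht.2.not_ge (hleast ⟨⟨ht.1, ht.2.le.trans hxb⟩, hle⟩)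
  have hsub : Icc a x ⊆ Icc a b := Icc_subset_Icc_right hxb
  obtain ⟨c, hc, hfg⟩ := isPreconnected_Icc.intermediate_value₂ (left_mem_Icc.2 hax)
    (right_mem_Icc.2 hax) (hf.mono hsub) (hg.mono hsub) ha.le hgf
  obtain rfl : c = x := hc.2.eq_of_not_lt fun hcx ↦ (hbefore c ⟨hc.1, hcx⟩).ne hfg
  exact ⟨c, ⟨hax.lt_of_ne (by rintro rfl; exact ha.ne hfg), hxb⟩, hfg, hbefore⟩

section DerivativeComparison

variable {𝕜 : Type*} [NontriviallyNormedField 𝕜] [LinearOrder 𝕜] [IsStrictOrderedRing 𝕜]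
  [OrderTopology 𝕜] {f g : 𝕜 → 𝕜} {f' g' x : 𝕜}

theorem eventually_lt_nhdsGT_of_deriv_lt (hf : HasDerivWithinAt f f' (Ioi x) x)
    (hg : HasDerivWithinAt g g' (Ioi x) x) (hx : f x = g x) (hlt : f' < g') :
    ∀ᶠ t in 𝓝[>] x, f t < g t := by
  have hslope := (hasDerivWithinAt_iff_tendsto_slope' self_notMem_Ioi).1 (hg.sub hf)
  filter_upwards [hslope.eventually_const_lt (sub_pos.2 hlt), self_mem_nhdsWithin] with t ht hxt
  exact sub_pos.1 (pos_of_slope_pos (f := g - f) hxt ht (sub_eq_zero.2 hx.symm))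

theorem eventually_lt_nhdsLT_of_deriv_lt (hf : HasDerivWithinAt f f' (Iio x) x)
    (hg : HasDerivWithinAt g g' (Iio x) x) (hx : f x = g x) (hlt : f' < g') :
    ∀ᶠ t in 𝓝[<] x, g t < f t := by
  have hslope := (hasDerivWithinAt_iff_tendsto_slope' self_notMem_Iio).1 (hg.sub hf)
  filter_upwards [hslope.eventually_const_lt (sub_pos.2 hlt), self_mem_nhdsWithin] with t ht htx
  exact sub_neg.1 (neg_of_slope_pos (f := g - f) htx ht (sub_eq_zero.2 hx.symm))

end DerivativeComparison

theorem exists_fixed_point_deriv_le_one {h h' : ℝ → ℝ} {a b : ℝ} (hab : a ≤ b)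
    (hcont : ContinuousOn h (Icc a b))
    (hderiv : ∀ x ∈ Ioc a b, h x = x → HasDerivWithinAt h (h' x) (Iio x) x)
    (ha : a < h a) (hb : h b ≤ b) : ∃ x ∈ Ioc a b, h x = x ∧ h' x ≤ 1 := by
  obtain ⟨x, hx, hfix, habove⟩ := exists_first_eq_of_lt_of_le hab continuousOn_id hcont ha hb
  refine ⟨x, hx, hfix.symm, le_of_not_gt fun hgt ↦ ?_⟩
  have hbelow : ∀ᶠ t in 𝓝[<] x, h t < t :=
    eventually_lt_nhdsLT_of_deriv_lt (hasDerivWithinAt_id x _) (hderiv x hx hfix.symm) hfix hgt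
  obtain ⟨t, hlt, ht⟩ := (hbelow.and (Ico_mem_nhdsLT hx.1)).exists
  exact hlt.not_gt (habove t ht)

theorem nonrepelling_fixed_point_between_general {h h' : ℝ → ℝ} {p q : ℝ} (hpq : p < q)
    (hcont : ContinuousOn h (Icc p q))
    (hderiv : ∀ x ∈ Icc p q, h x = x → HasDerivWithinAt h (h' x) (Icc p q) x)
    (hp : h p = p) (hq : h q = q) (hp' : 1 < h' p) (hq' : 1 < h' q)
    (hlower : ∀ x ∈ Ioo p q, h x = x → -1 ≤ h' x) :
    ∃ x ∈ Ioo p q, h x = x ∧ |h' x| ≤ 1 := by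
  have hleft : ∀ x ∈ Ioc p q, h x = x → HasDerivWithinAt h (h' x) (Iio x) x := fun x hx hfix ↦
    (hderiv x (Ioc_subset_Icc_self hx) hfix).mono_of_mem_nhdsWithin (Icc_mem_nhdsLT_of_mem hx)
  have hright : HasDerivWithinAt h (h' p) (Ioi p) p :=
    (hderiv p (left_mem_Icc.2 hpq.le) hp).mono_of_mem_nhdsWithin (Icc_mem_nhdsGT hpq)
  have habove : ∀ᶠ t in 𝓝[>] p, t < h t :=
    eventually_lt_nhdsGT_of_deriv_lt (hasDerivWithinAt_id p _) hright hp.symm hp'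
  have hbelow : ∀ᶠ t in 𝓝[<] q, h t < t :=
    eventually_lt_nhdsLT_of_deriv_lt (hasDerivWithinAt_id q _)
      (hleft q (right_mem_Ioc.2 hpq) hq) hq.symm hq'
  obtain ⟨a, ha, hpa, haq⟩ := (habove.and (Ioo_mem_nhdsGT hpq)).exists
  obtain ⟨b, hb, hab, hbq⟩ := (hbelow.and (Ioo_mem_nhdsLT haq)).exists
  obtain ⟨x, ⟨hax, hxb⟩, hfix, hle⟩ := exists_fixed_point_deriv_le_one hab.le
    (hcont.mono (Icc_subset_Icc hpa.le hbq.le))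
    (fun x hx ↦ hleft x (Ioc_subset_Ioc hpa.le hbq.le hx)) ha hb.le
  have hx : x ∈ Ioo p q := ⟨hpa.trans hax, hxb.trans_lt hbq⟩
  exact ⟨x, hx, hfix, abs_le.2 ⟨hlower x hx hfix, hle⟩⟩

/-- Between two repelling fixed points of an order-preserving differentiable
interval map there is a non-repelling fixed point: if `h : ℝ → ℝ` is
differentiable, `p < q` are fixed points with `h'(p) > 1`, `h'(q) > 1`, and
`h' ≥ 0` on `[p,q]`, then there is `x ∈ (p,q)` with `h(x) = x` and `|h'(x)| ≤ 1`. -/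
theorem nonrepelling_fixed_point_between (h : ℝ → ℝ) (hdiff : Differentiable ℝ h)
    (p q : ℝ) (hpq : p < q) (hp : h p = p) (hq : h q = q)
    (hp' : 1 < deriv h p) (hq' : 1 < deriv h q)
    (hmono : ∀ t ∈ Set.Icc p q, 0 ≤ deriv h t) :
    ∃ x ∈ Set.Ioo p q, h x = x ∧ |deriv h x| ≤ 1 :=
  nonrepelling_fixed_point_between_general hpq hdiff.continuous.continuousOn
    (fun x _ _ ↦ (hdiff x).hasDerivAt.hasDerivWithinAt) hp hq hp' hq'
    fun x hx _ ↦ neg_one_lt_zero.le.trans (hmono x (Ioo_subset_Icc_self hx))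
end

section
/- Let d₁, d₂ ≥ 2 be integers and c₁, c₂ ∈ ℂ, and suppose that for i = 1, 2 the polynomial p_{c_i}(z) = z^{d_i} + c_i has a parabolic fixed point z_i with multiplier one, i.e. p_{c_i}(z_i) = z_i and p_{c_i}'(z_i) = 1. If the germs of p_{c₁} at z₁ and of p_{c₂} at z₂ are conformally conjugate — i.e. there exist open neighborhoods N₁ of z₁ and N₂ of z₂ and an injective holomorphic map φ : N₁ → ℂ with φ(N₁) = N₂, φ(z₁) = z₂, and φ(p_{c₁}(z)) = p_{c₂}(φ(z)) for all z ∈ N₁ with p_{c₁}(z) ∈ N₁ — then d₁ = d₂, and there exists λ ∈ ℂ with λ^{d₁−1} = 1 and c₂ = λc₁, so that p_{c₁} and p_{c₂} are affinely conjugate. -/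
/-!
If `φ ∘ f = g ∘ φ` near `x`, then `φ ∘ f - φ = (g - id) ∘ φ`. Let `x` be a fixed point of `f` of
multiplicity two and let `φ` take its value at `x` with order `k`. The left-hand side vanishes to
order `k + 1` at `x`, the right-hand side to order `m * k`, where `m` is the multiplicity of `φ x`
as a fixed point of `g`. Hence `k = 1` and `m = 2`: the map `φ` is automatically a local coordinate
change, and `φ x` is again a double fixed point. Comparing the second and third derivatives of
`φ ∘ f = g ∘ φ`, the derivatives of `φ` cancel from the ratio of the third derivative to the square
of the second, which is the fixed point index up to a constant factor. For `z ^ d + c` this index is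
`2 * (d - 2) / (3 * (d - 1))`, which determines `d`. For fixed `d`, the fixed point satisfies
`d * z ^ (d - 1) = 1` and `d * c = (d - 1) * z`, so `c` is determined up to a `(d - 1)`-st root of
unity.
-/

open Filter Topology

variable {𝕜 : Type*} [NontriviallyNormedField 𝕜]

section Germs

variable {f g φ : 𝕜 → 𝕜} {x : 𝕜}

/-- The multiplicity of `x` as a fixed point of `f`, i.e. the order of vanishing of `f - id` at `x`.
It is `0` if `x` is not fixed (or `f` is not analytic at `x`), and at least `2` exactly at the
parabolic fixed points of multiplier one. -/
noncomputable def fixedPointMultiplicity (f : 𝕜 → 𝕜) (x : 𝕜) : ℕ∞ :=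
  analyticOrderAt (fun z => f z - z) x

/-- The holomorphic fixed point index of `f` at a fixed point `x` of multiplicity two. Over `ℂ` it
is the residue of `1 / (z - f z)` at `x`, which equals `b / a ^ 2` if
`f (x + w) = x + w + a * w ^ 2 + b * w ^ 3 + ⋯`; the formula is meaningful for `a ≠ 0` only. -/
noncomputable def doubleFixedPointIndex (f : 𝕜 → 𝕜) (x : 𝕜) : 𝕜 :=
  2 * iteratedDeriv 3 f x / (3 * iteratedDeriv 2 f x ^ 2)

/-- If `f z - z = (z - x) ^ 2 * u z` and `φ z - φ x = (z - x) ^ k * h z`, the differentiated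
function is the cofactor of `(z - x) ^ k` in `φ (f z) - φ z`. -/
theorem hasDerivAt_one_add_mul_pow_mul_comp_sub {u h : 𝕜 → 𝕜} (hfx : f x = x)
    (hf : HasDerivAt f 1 x) (hu : DifferentiableAt 𝕜 u x) (hh : DifferentiableAt 𝕜 h x) (k : ℕ) :
    HasDerivAt (fun z => (1 + (z - x) * u z) ^ k * h (f z) - h z) (k * u x * h x) x := by
  have hpow : HasDerivAt (fun z => (1 + (z - x) * u z) ^ k) (k * u x) x := by
    simpa using ((((hasDerivAt_id' x).sub_const x).fun_mul hu.hasDerivAt).const_add 1).fun_pow k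
  have hcomp : HasDerivAt (h ∘ f) (deriv h x) x := by
    simpa using HasDerivAt.comp_of_eq x hh.hasDerivAt hf hfx.symm
  simpa [hfx] using (hpow.fun_mul hcomp).fun_sub hh.hasDerivAt

variable [CharZero 𝕜]

theorem analyticOrderAt_one_add_mul_pow_mul_comp_sub {u h : 𝕜 → 𝕜} (hf : AnalyticAt 𝕜 f x)
    (hfx : f x = x) (hf' : deriv f x = 1) (hu : AnalyticAt 𝕜 u x) (hu0 : u x ≠ 0)
    (hh : AnalyticAt 𝕜 h x) (hh0 : h x ≠ 0) {k : ℕ} (hk : k ≠ 0) :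
    analyticOrderAt (fun z => (1 + (z - x) * u z) ^ k * h (f z) - h z) x = 1 := by
  have hpow : AnalyticAt 𝕜 (fun z => (1 + (z - x) * u z) ^ k) x := by fun_prop
  have hcomp : AnalyticAt 𝕜 (fun z => h (f z)) x := AnalyticAt.fun_comp (by rwa [hfx]) hf
  refine ((hpow.fun_mul hcomp).fun_sub hh).analyticOrderAt_eq_one_of_zero_deriv_ne_zero
    (by simp [hfx]) ?_
  rw [(hasDerivAt_one_add_mul_pow_mul_comp_sub hfx (hf' ▸ hf.differentiableAt.hasDerivAt)
    hu.differentiableAt hh.differentiableAt k).deriv]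
  exact mul_ne_zero (mul_ne_zero (Nat.cast_ne_zero.2 hk) hu0) hh0

variable [CompleteSpace 𝕜]

theorem fixedPointMultiplicity_eq_two_iff (hf : AnalyticAt 𝕜 f x) :
    fixedPointMultiplicity f x = 2 ↔ f x = x ∧ deriv f x = 1 ∧ iteratedDeriv 2 f x ≠ 0 := by
  have hderiv : iteratedDeriv 1 (fun z => f z - z) x = deriv f x - 1 := by
    simp [hf.differentiableAt]
  have hderiv₂ : iteratedDeriv 2 (fun z => f z - z) x = iteratedDeriv 2 f x := by
    rw [iteratedDeriv_fun_sub hf.contDiffAt (by fun_prop), iteratedDeriv_fun_id]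
    simp
  rw [fixedPointMultiplicity, ← Nat.cast_two,
    analyticOrderAt_eq_nat_iff_iteratedDeriv_eq_zero (by fun_prop), hderiv₂]
  simp only [Nat.forall_lt_succ_left, hderiv, iteratedDeriv_zero, sub_eq_zero]
  simp [and_assoc]

theorem analyticOrderAt_comp_sub_self_of_fixedPointMultiplicity_eq_two
    (hf : AnalyticAt 𝕜 f x) (hmult : fixedPointMultiplicity f x = 2) (hφ : AnalyticAt 𝕜 φ x)
    (hconst : ¬ EventuallyConst φ (𝓝 x)) :
    analyticOrderAt (fun z => φ (f z) - φ z) x = analyticOrderAt (fun z => φ z - φ x) x + 1 := by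
  obtain ⟨hfx, hf', -⟩ := (fixedPointMultiplicity_eq_two_iff hf).1 hmult
  obtain ⟨u, hu, hu0, hfu⟩ : ∃ u : 𝕜 → 𝕜, AnalyticAt 𝕜 u x ∧ u x ≠ 0 ∧
      ∀ᶠ z in 𝓝 x, f z - z = (z - x) ^ 2 * u z :=
    (hf.fun_sub analyticAt_id).analyticOrderAt_eq_natCast.1 hmult
  rw [eventuallyConst_iff_analyticOrderAt_sub_eq_top] at hconst
  obtain ⟨k, hk⟩ := ENat.ne_top_iff_exists.1 hconst
  have hφ_sub : AnalyticAt 𝕜 (fun z => φ z - φ x) x := hφ.fun_sub analyticAt_const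
  have hk0 : k ≠ 0 := by
    rintro rfl
    exact analyticOrderAt_ne_zero.2 ⟨hφ_sub, sub_self _⟩ hk.symm
  obtain ⟨h, hh, hh0, hφh⟩ : ∃ h : 𝕜 → 𝕜, AnalyticAt 𝕜 h x ∧ h x ≠ 0 ∧
      ∀ᶠ z in 𝓝 x, φ z - φ x = (z - x) ^ k * h z :=
    hφ_sub.analyticOrderAt_eq_natCast.1 hk.symm
  have hfactor : (fun z => φ (f z) - φ z) =ᶠ[𝓝 x]
      (· - x) ^ k * (fun z => (1 + (z - x) * u z) ^ k * h (f z) - h z) := by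
    have hlim : Tendsto f (𝓝 x) (𝓝 x) := by simpa [ContinuousAt, hfx] using hf.continuousAt
    filter_upwards [hfu, hφh, hlim.eventually hφh] with z hfz hφz hφfz
    have hfz' : f z - x = (z - x) * (1 + (z - x) * u z) := by linear_combination hfz
    rw [hfz', mul_pow] at hφfz
    simp only [Pi.mul_apply, Pi.pow_apply]
    linear_combination hφfz - hφz
  have horder := analyticOrderAt_one_add_mul_pow_mul_comp_sub hf hfx hf' hu hu0 hh hh0 hk0
  rw [analyticOrderAt_congr hfactor, analyticOrderAt_mul (by fun_prop)
    (analyticOrderAt_ne_zero.1 (horder ▸ one_ne_zero)).1, analyticOrderAt_centeredMonomial, hk,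
    horder]

theorem order_eq_one_and_fixedPointMultiplicity_eq_two_of_semiconj
    (hf : AnalyticAt 𝕜 f x) (hmult : fixedPointMultiplicity f x = 2)
    (hg : AnalyticAt 𝕜 g (φ x)) (hφ : AnalyticAt 𝕜 φ x) (hconst : ¬ EventuallyConst φ (𝓝 x))
    (hsemi : φ ∘ f =ᶠ[𝓝 x] g ∘ φ) :
    analyticOrderAt (fun z => φ z - φ x) x = 1 ∧ fixedPointMultiplicity g (φ x) = 2 := by
  have horder : analyticOrderAt (fun z => φ z - φ x) x + 1 =
      fixedPointMultiplicity g (φ x) * analyticOrderAt (fun z => φ z - φ x) x := calc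
    _ = analyticOrderAt (fun z => φ (f z) - φ z) x :=
      (analyticOrderAt_comp_sub_self_of_fixedPointMultiplicity_eq_two hf hmult hφ hconst).symm
    _ = analyticOrderAt ((fun w => g w - w) ∘ φ) x :=
      analyticOrderAt_congr (hsemi.sub (EventuallyEq.refl _ φ))
    _ = _ := AnalyticAt.analyticOrderAt_comp (by fun_prop) hφ
  rw [eventuallyConst_iff_analyticOrderAt_sub_eq_top] at hconst
  generalize fixedPointMultiplicity g (φ x) = m at horder ⊢
  generalize analyticOrderAt (fun z => φ z - φ x) x = k at hconst horder ⊢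
  lift k to ℕ using hconst
  have hk0 : k ≠ 0 := by
    rintro rfl
    simp at horder
  have hm : m ≠ ⊤ := by
    rintro rfl
    simp [hk0, ENat.top_mul] at horder
  lift m to ℕ using hm
  norm_cast at horder ⊢
  have hk1 : k = 1 := Nat.dvd_one.1 <|
    (Nat.dvd_add_right (dvd_refl k)).1 (horder ▸ dvd_mul_left k m)
  subst hk1
  exact ⟨rfl, by lia⟩

theorem deriv_ne_zero_of_semiconj (hf : AnalyticAt 𝕜 f x)
    (hmult : fixedPointMultiplicity f x = 2) (hg : AnalyticAt 𝕜 g (φ x)) (hφ : AnalyticAt 𝕜 φ x)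
    (hconst : ¬ EventuallyConst φ (𝓝 x)) (hsemi : φ ∘ f =ᶠ[𝓝 x] g ∘ φ) : deriv φ x ≠ 0 := by
  have horder := (order_eq_one_and_fixedPointMultiplicity_eq_two_of_semiconj
    hf hmult hg hφ hconst hsemi).1
  rw [← Nat.cast_one, analyticOrderAt_eq_nat_iff_iteratedDeriv_eq_zero (by fun_prop)] at horder
  simpa using horder.2

theorem doubleFixedPointIndex_eq_of_semiconj
    (hf : AnalyticAt 𝕜 f x) (hmult : fixedPointMultiplicity f x = 2)
    (hg : AnalyticAt 𝕜 g (φ x)) (hφ : AnalyticAt 𝕜 φ x) (hconst : ¬ EventuallyConst φ (𝓝 x))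
    (hsemi : φ ∘ f =ᶠ[𝓝 x] g ∘ φ) :
    doubleFixedPointIndex f x = doubleFixedPointIndex g (φ x) := by
  have hφ' : deriv φ x ≠ 0 := deriv_ne_zero_of_semiconj hf hmult hg hφ hconst hsemi
  have hmult' := (order_eq_one_and_fixedPointMultiplicity_eq_two_of_semiconj
    hf hmult hg hφ hconst hsemi).2
  obtain ⟨hfx, hf', -⟩ := (fixedPointMultiplicity_eq_two_iff hf).1 hmult
  obtain ⟨-, hg', hg''⟩ := (fixedPointMultiplicity_eq_two_iff hg).1 hmult'
  have hφf : AnalyticAt 𝕜 φ (f x) := by rwa [hfx]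
  have hf₂ : iteratedDeriv 2 f x = iteratedDeriv 2 g (φ x) * deriv φ x := by
    have h := hsemi.iteratedDeriv_eq 2
    rw [iteratedDeriv_comp_two hφf.contDiffAt hf.contDiffAt,
      iteratedDeriv_comp_two hg.contDiffAt hφ.contDiffAt, hfx, hf', hg'] at h
    exact mul_left_cancel₀ hφ' (by linear_combination h)
  have hf₃ : iteratedDeriv 3 f x = iteratedDeriv 3 g (φ x) * deriv φ x ^ 2 := by
    have h := hsemi.iteratedDeriv_eq 3
    rw [iteratedDeriv_comp_three hφf.contDiffAt hf.contDiffAt,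
      iteratedDeriv_comp_three hg.contDiffAt hφ.contDiffAt, hfx, hf', hg', hf₂] at h
    exact mul_left_cancel₀ hφ' (by linear_combination h)
  rw [doubleFixedPointIndex, doubleFixedPointIndex, hf₂, hf₃]
  field_simp

end Germs

theorem not_eventuallyConst_of_injOn {X Y : Type*} [TopologicalSpace X] {φ : X → Y} {s : Set X}
    {x : X} [(𝓝[≠] x).NeBot] (hs : s ∈ 𝓝 x) (hinj : Set.InjOn φ s) :
    ¬ EventuallyConst φ (𝓝 x) := by
  have : Nonempty Y := ⟨φ x⟩
  intro hconst
  obtain ⟨y, hy⟩ := eventuallyConst_iff_exists_eventuallyEq.1 hconst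
  have hne : ∃ᶠ z in 𝓝 x, z ≠ x := frequently_iff_neBot.2 (inferInstanceAs (𝓝[≠] x).NeBot)
  obtain ⟨z, hzx, hz, hzs⟩ := (hne.and_eventually (hy.and hs)).exists
  exact hzx (hinj hzs (mem_of_mem_nhds hs) (hz.trans hy.self_of_nhds.symm))

/-- The unicritical polynomial `p_c` of degree `d`. -/
def unicritical {R : Type*} [Semiring R] (d : ℕ) (c z : R) : R := z ^ d + c

theorem exists_pow_eq_one_and_eq_mul_of_unicritical_eq_self {K : Type*} [Field K] {d : ℕ}
    (hd : 2 ≤ d) {c₁ c₂ z₁ z₂ : K}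
    (hfix₁ : unicritical d c₁ z₁ = z₁) (hmult₁ : d * z₁ ^ (d - 1) = 1)
    (hfix₂ : unicritical d c₂ z₂ = z₂) (hmult₂ : d * z₂ ^ (d - 1) = 1) :
    ∃ lam : K, lam ^ (d - 1) = 1 ∧ c₂ = lam * c₁ := by
  have hz₁ : z₁ ^ (d - 1) ≠ 0 := right_ne_zero_of_mul_eq_one hmult₁
  have hpow : z₂ ^ (d - 1) = z₁ ^ (d - 1) :=
    mul_left_cancel₀ (left_ne_zero_of_mul_eq_one hmult₁) (hmult₂.trans hmult₁.symm)
  refine ⟨z₂ / z₁, by rw [div_pow, hpow, div_self hz₁], ?_⟩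
  rw [unicritical, ← mul_pow_sub_one (by lia)] at hfix₁ hfix₂
  rw [hpow] at hfix₂
  have hz₁' : z₁ ≠ 0 := ne_zero_pow (by lia) hz₁
  field_simp
  linear_combination z₁ * hfix₂ - z₂ * hfix₁

section Unicritical

variable {d d₁ d₂ : ℕ} {c c₁ c₂ z z₁ z₂ : 𝕜}

theorem analyticAt_unicritical : AnalyticAt 𝕜 (unicritical d c) z := by
  unfold unicritical
  fun_prop

theorem deriv_unicritical : deriv (unicritical d c) z = d * z ^ (d - 1) := by
  simp +unfoldPartialApp [unicritical]

theorem iteratedDeriv_unicritical {n : ℕ} (hn : 0 < n) :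
    iteratedDeriv n (unicritical d c) z = d.descFactorial n * z ^ (d - n) := by
  simp +unfoldPartialApp [unicritical, add_comm _ c, iteratedDeriv_const_add hn]

theorem iteratedDeriv_succ_unicritical_of_mul_pow_eq_one (hmult : d * z ^ (d - 1) = 1) (n : ℕ) :
    iteratedDeriv (n + 1) (unicritical d c) z = (d - 1).descFactorial n / z ^ n := by
  rw [iteratedDeriv_unicritical n.succ_pos]
  obtain _ | k := d
  · simp at hmult
  rw [Nat.succ_descFactorial_succ, Nat.add_sub_cancel, Nat.add_sub_add_right]
  rw [Nat.add_sub_cancel] at hmult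
  rcases le_or_gt n k with hnk | hnk
  · have hzn : z ^ n ≠ 0 :=
      ne_zero_of_dvd_ne_zero (right_ne_zero_of_mul_eq_one hmult) (pow_dvd_pow z hnk)
    rw [eq_div_iff hzn, mul_assoc, pow_sub_mul_pow z hnk, Nat.cast_mul]
    linear_combination k.descFactorial n * hmult
  · simp [Nat.descFactorial_of_lt hnk]

variable [CharZero 𝕜]

theorem doubleFixedPointIndex_unicritical (hd : 2 ≤ d) (hmult : d * z ^ (d - 1) = 1) :
    doubleFixedPointIndex (unicritical d c) z = 2 * (d - 2) / (3 * (d - 1)) := by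
  have hz : z ≠ 0 := ne_zero_pow (by lia) (right_ne_zero_of_mul_eq_one hmult)
  have hd' : ((d - 1 : ℕ) : 𝕜) ≠ 0 := Nat.cast_ne_zero.2 (by lia)
  rw [doubleFixedPointIndex, iteratedDeriv_succ_unicritical_of_mul_pow_eq_one hmult,
    iteratedDeriv_succ_unicritical_of_mul_pow_eq_one hmult, Nat.cast_descFactorial_two,
    Nat.descFactorial_one]
  rw [Nat.cast_pred (by lia)] at hd' ⊢
  field_simp
  ring

theorem eq_of_doubleFixedPointIndex_unicritical_eq
    (hd₁ : 2 ≤ d₁) (hmult₁ : d₁ * z₁ ^ (d₁ - 1) = 1)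
    (hd₂ : 2 ≤ d₂) (hmult₂ : d₂ * z₂ ^ (d₂ - 1) = 1)
    (hindex : doubleFixedPointIndex (unicritical d₁ c₁) z₁ =
      doubleFixedPointIndex (unicritical d₂ c₂) z₂) : d₁ = d₂ := by
  have hd₁' : (d₁ : 𝕜) - 1 ≠ 0 := sub_ne_zero.2 (Nat.cast_ne_one.2 (by lia))
  have hd₂' : (d₂ : 𝕜) - 1 ≠ 0 := sub_ne_zero.2 (Nat.cast_ne_one.2 (by lia))
  rw [doubleFixedPointIndex_unicritical hd₁ hmult₁, doubleFixedPointIndex_unicritical hd₂ hmult₂]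
    at hindex
  field_simp at hindex
  exact Nat.cast_injective (R := 𝕜) (by linear_combination hindex)

variable [CompleteSpace 𝕜]

theorem fixedPointMultiplicity_unicritical_eq_two_iff :
    fixedPointMultiplicity (unicritical d c) z = 2 ↔
      2 ≤ d ∧ unicritical d c z = z ∧ d * z ^ (d - 1) = 1 := by
  rw [fixedPointMultiplicity_eq_two_iff analyticAt_unicritical, deriv_unicritical,
    iteratedDeriv_unicritical two_pos]
  constructor
  · rintro ⟨hfix, hmult, hne⟩
    have hd : d.descFactorial 2 ≠ 0 := Nat.cast_ne_zero.1 (left_ne_zero_of_mul hne)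
    exact ⟨not_lt.1 (mt Nat.descFactorial_eq_zero_iff_lt.2 hd), hfix, hmult⟩
  · rintro ⟨hd, hfix, hmult⟩
    have hz : z ≠ 0 := ne_zero_pow (by lia) (right_ne_zero_of_mul_eq_one hmult)
    refine ⟨hfix, hmult, mul_ne_zero ?_ (pow_ne_zero _ hz)⟩
    exact_mod_cast mt Nat.descFactorial_eq_zero_iff_lt.1 hd.not_gt

theorem parabolic_germ_determines_unicritical_general
    (hd₁ : 2 ≤ d₁) (hfix₁ : unicritical d₁ c₁ z₁ = z₁)
    (hmult₁ : deriv (unicritical d₁ c₁) z₁ = 1) {φ : 𝕜 → 𝕜}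
    (hφ : AnalyticAt 𝕜 φ z₁) (hconst : ¬ EventuallyConst φ (𝓝 z₁))
    (hsemi : φ ∘ unicritical d₁ c₁ =ᶠ[𝓝 z₁] unicritical d₂ c₂ ∘ φ) :
    d₁ = d₂ ∧ ∃ lam : 𝕜, lam ^ (d₁ - 1) = 1 ∧ c₂ = lam * c₁ := by
  rw [deriv_unicritical] at hmult₁
  have h₁ : fixedPointMultiplicity (unicritical d₁ c₁) z₁ = 2 :=
    fixedPointMultiplicity_unicritical_eq_two_iff.2 ⟨hd₁, hfix₁, hmult₁⟩
  obtain ⟨hd₂, hfix₂, hmult₂⟩ := fixedPointMultiplicity_unicritical_eq_two_iff.1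
    (order_eq_one_and_fixedPointMultiplicity_eq_two_of_semiconj analyticAt_unicritical h₁
      analyticAt_unicritical hφ hconst hsemi).2
  obtain rfl : d₁ = d₂ := eq_of_doubleFixedPointIndex_unicritical_eq hd₁ hmult₁ hd₂ hmult₂ <|
    doubleFixedPointIndex_eq_of_semiconj analyticAt_unicritical h₁ analyticAt_unicritical
      hφ hconst hsemi
  exact ⟨rfl, exists_pow_eq_one_and_eq_mul_of_unicritical_eq_self hd₁ hfix₁ hmult₁ hfix₂ hmult₂⟩

end Unicritical

/-- Parabolic germs determine unicritical polynomials (multiplier-one fixed point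
case): if `p_{c_i}(z) = z^{d_i} + c_i` (with `d_i ≥ 2`) has a fixed point `z_i` of
multiplier one, and the germs of `p_{c₁}` at `z₁` and `p_{c₂}` at `z₂` are
conformally conjugate, then `d₁ = d₂` and `p_{c₁}`, `p_{c₂}` are affinely
conjugate, i.e. `c₂ = λ c₁` for some `(d₁-1)`-st root of unity `λ`. -/
theorem parabolic_germ_determines_unicritical (d₁ d₂ : ℕ) (hd₁ : 2 ≤ d₁) (hd₂ : 2 ≤ d₂)
    (c₁ c₂ z₁ z₂ : ℂ)
    (hfix₁ : z₁ ^ d₁ + c₁ = z₁) (hfix₂ : z₂ ^ d₂ + c₂ = z₂)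
    (hmult₁ : deriv (fun z : ℂ => z ^ d₁ + c₁) z₁ = 1)
    (hmult₂ : deriv (fun z : ℂ => z ^ d₂ + c₂) z₂ = 1)
    (hconj : ∃ (N₁ N₂ : Set ℂ) (φ : ℂ → ℂ),
      IsOpen N₁ ∧ IsOpen N₂ ∧ z₁ ∈ N₁ ∧ z₂ ∈ N₂ ∧
      DifferentiableOn ℂ φ N₁ ∧ Set.InjOn φ N₁ ∧ φ '' N₁ = N₂ ∧ φ z₁ = z₂ ∧
      ∀ z ∈ N₁, (z ^ d₁ + c₁) ∈ N₁ → φ (z ^ d₁ + c₁) = (φ z) ^ d₂ + c₂) :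
    d₁ = d₂ ∧ ∃ lam : ℂ, lam ^ (d₁ - 1) = 1 ∧ c₂ = lam * c₁ := by
  obtain ⟨N₁, -, φ, hN₁, -, hz₁, -, hφ, hinj, -, -, hsemi⟩ := hconj
  have hN₁z : N₁ ∈ 𝓝 z₁ := hN₁.mem_nhds hz₁
  have hpz : ∀ᶠ z in 𝓝 z₁, z ^ d₁ + c₁ ∈ N₁ :=
    ContinuousAt.eventually_mem (by fun_prop) (by rwa [hfix₁])
  refine parabolic_germ_determines_unicritical_general hd₁ hfix₁ hmult₁ (hφ.analyticAt hN₁z)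
    (not_eventuallyConst_of_injOn hN₁z hinj) ?_
  filter_upwards [hN₁z, hpz] with z hz hpz using hsemi z hz hpz
end

section
/- Let d ≥ 2 be an integer, c ∈ ℂ, and ω = exp(2πi/(d+1)). The anti-polynomial f_c(z) = z̄^d + c commutes with some invertible anti-holomorphic affine map of the plane (a map of the form τ(z) = μz̄ + ν with μ ≠ 0) if and only if c̄ = ω^j c for some integer j; moreover any such commuting map τ necessarily has ν = 0 and μ^{d+1} = 1, and is automatically an anti-holomorphic involution (τ∘τ = id). -/
/-!
Expanding `τ ∘ f_c = f_c ∘ τ` gives the polynomial identity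
`μ z ^ d + (μ c̄ + ν) = (μ̄ z + ν̄) ^ d + c`. As `d ≥ 2`, the right side has no linear term only
if `ν = 0`, and what remains is `μ̄ = μ ^ d` and `μ c̄ = c`. Taking norms in the first equation
gives `‖μ‖ = 1`, so it says exactly that `μ` is a `(d + 1)`-st root of unity, that is, a power
of `ω`.
-/

open ComplexConjugate

theorem forall_mul_pow_add_eq_add_pow_add_iff {R : Type*} [CommRing R] [IsDomain R] [CharZero R]
    {d : ℕ} (hd : 2 ≤ d) {a b m n e : R} (hm : m ≠ 0) :
    (∀ z, a * z ^ d + b = (m * z + n) ^ d + e) ↔ n = 0 ∧ a = m ^ d ∧ b = e := by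
  have hd₀ : d ≠ 0 := by omega
  have hd₁ : d - 1 ≠ 0 := by omega
  constructor
  · intro h
    have hpoly : (.C a * .X ^ d + .C b : Polynomial R) = (.C m * .X + .C n) ^ d + .C e :=
      Polynomial.funext fun z => by simpa using h z
    have hlinear : (d : R) * n ^ (d - 1) * m = 0 := by
      simpa [Polynomial.derivative_pow, hd₁] using
        (congrArg (fun p => p.derivative.eval 0) hpoly).symm
    obtain rfl : n = 0 := by simpa [hm, hd₀, hd₁] using hlinear
    have hconst : b = e := by simpa [hd₀] using h 0
    exact ⟨rfl, by simpa [hconst] using h 1, hconst⟩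
  · rintro ⟨rfl, rfl, rfl⟩ z
    rw [add_zero, mul_pow]

theorem exists_pow_eq_one_and_mul_eq_iff_exists_eq_zpow_mul {K : Type*} [Field K] {n : ℕ}
    [NeZero n] {ω : K} (hω : IsPrimitiveRoot ω n) {a b : K} :
    (∃ μ, μ ^ n = 1 ∧ μ * a = b) ↔ ∃ j : ℤ, a = ω ^ j * b := by
  have hω₀ : ω ≠ 0 := hω.ne_zero (NeZero.ne n)
  constructor
  · rintro ⟨μ, hμ, rfl⟩
    obtain ⟨i, -, rfl⟩ := hω.eq_pow_of_pow_eq_one hμ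
    exact ⟨-i, by rw [zpow_neg, zpow_natCast, inv_mul_cancel_left₀ (pow_ne_zero i hω₀)]⟩
  · rintro ⟨j, rfl⟩
    refine ⟨ω ^ (-j), ?_, ?_⟩
    · rw [← zpow_natCast, zpow_comm, zpow_natCast, hω.pow_eq_one, one_zpow]
    · rw [zpow_neg, inv_mul_cancel_left₀ (zpow_ne_zero j hω₀)]

section RCLike

variable {𝕜 : Type*} [RCLike 𝕜]

theorem mul_conj_eq_one_of_norm_eq_one {μ : 𝕜} (hμ : ‖μ‖ = 1) : μ * conj μ = 1 := by
  simp [RCLike.mul_conj, hμ]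

theorem norm_eq_one_of_conj_eq_pow {μ : 𝕜} {d : ℕ} (hμ : μ ≠ 0) (hd : d ≠ 1)
    (h : conj μ = μ ^ d) : ‖μ‖ = 1 := by
  have hnorm : ‖μ‖ ^ d = ‖μ‖ ^ 1 := by rw [← norm_pow, ← h, RCLike.norm_conj, pow_one]
  by_contra hne
  exact hd (pow_right_injective₀ (norm_pos_iff.2 hμ) hne hnorm)

theorem conj_eq_pow_iff_pow_succ_eq_one {μ : 𝕜} {d : ℕ} (hμ : μ ≠ 0) (hd : d ≠ 1) :
    conj μ = μ ^ d ↔ μ ^ (d + 1) = 1 := by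
  have iff_of_norm (hn : ‖μ‖ = 1) : conj μ = μ ^ d ↔ μ ^ (d + 1) = 1 := by
    rw [← mul_right_inj' hμ, mul_conj_eq_one_of_norm_eq_one hn, ← pow_succ', eq_comm]
  exact ⟨fun h => (iff_of_norm (norm_eq_one_of_conj_eq_pow hμ hd h)).1 h,
    fun h => (iff_of_norm
      (isOfFinOrder_iff_pow_eq_one.2 ⟨d + 1, d.succ_pos, h⟩).norm_eq_one).2 h⟩

end RCLike

section StarRing

variable {R : Type*} [CommSemiring R] [StarRing R]

/-- The unicritical anti-polynomial `f_c(z) = z̄ ^ d + c`, over any commutative semiring with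
involution. -/
def antiPolynomial (d : ℕ) (c z : R) : R := conj z ^ d + c

/-- The map `τ(z) = μ z̄ + ν`, a candidate symmetry of an anti-polynomial. Invertibility is not
built in: it is imposed separately as `μ ≠ 0`. -/
def antiAffine (μ ν z : R) : R := μ * conj z + ν

theorem involutive_antiAffine_zero {μ : R} (hμ : μ * conj μ = 1) :
    Function.Involutive (antiAffine μ 0) := fun z => by
  simp only [antiAffine, add_zero, map_mul, starRingEnd_self_apply]
  rw [← mul_assoc, hμ, one_mul]

end StarRing

theorem commute_antiAffine_antiPolynomial_iff {R : Type*} [CommRing R] [IsDomain R] [CharZero R]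
    [StarRing R] {d : ℕ} (hd : 2 ≤ d) {c μ ν : R} (hμ : μ ≠ 0) :
    Function.Commute (antiAffine μ ν) (antiPolynomial d c) ↔
      ν = 0 ∧ conj μ = μ ^ d ∧ μ * conj c = c := by
  have expand : Function.Commute (antiAffine μ ν) (antiPolynomial d c) ↔
      ∀ z, μ * z ^ d + (μ * conj c + ν) = (conj μ * z + conj ν) ^ d + c := by
    simp only [Function.Commute, Function.Semiconj, antiAffine, antiPolynomial, map_add, map_mul,
      map_pow, starRingEnd_self_apply, mul_add, add_assoc]
  have conj_injective : Function.Injective (conj : R → R) := star_injective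
  have conj_eq : μ = conj μ ^ d ↔ conj μ = μ ^ d := by
    rw [← conj_injective.eq_iff, map_pow, starRingEnd_self_apply]
  rw [expand, forall_mul_pow_add_eq_add_pow_add_iff hd
    ((map_ne_zero_iff _ conj_injective).2 hμ), map_eq_zero_iff _ conj_injective, conj_eq]
  exact and_congr_right fun hν => by rw [hν, add_zero]

theorem commute_antiAffine_antiPolynomial_iff_pow_eq_one {𝕜 : Type*} [RCLike 𝕜] {d : ℕ}
    (hd : 2 ≤ d) {c μ ν : 𝕜} (hμ : μ ≠ 0) :
    Function.Commute (antiAffine μ ν) (antiPolynomial d c) ↔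
      ν = 0 ∧ μ ^ (d + 1) = 1 ∧ μ * conj c = c := by
  rw [commute_antiAffine_antiPolynomial_iff hd hμ,
    conj_eq_pow_iff_pow_succ_eq_one hμ (by omega)]

theorem exists_commute_antiAffine_antiPolynomial_iff {𝕜 : Type*} [RCLike 𝕜] {d : ℕ}
    (hd : 2 ≤ d) {c : 𝕜} :
    (∃ μ ν, μ ≠ 0 ∧ Function.Commute (antiAffine μ ν) (antiPolynomial d c)) ↔
      ∃ μ, μ ^ (d + 1) = 1 ∧ μ * conj c = c := by
  constructor
  · rintro ⟨μ, ν, hμ, h⟩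
    exact ⟨μ, ((commute_antiAffine_antiPolynomial_iff_pow_eq_one hd hμ).1 h).2⟩
  · rintro ⟨μ, hpow, hc⟩
    have hμ : μ ≠ 0 := (IsUnit.of_pow_eq_one hpow d.succ_ne_zero).ne_zero
    exact ⟨μ, 0, hμ, (commute_antiAffine_antiPolynomial_iff_pow_eq_one hd hμ).2 ⟨rfl, hpow, hc⟩⟩

/-- With `ω = exp(2πi/(d+1))`, the anti-polynomial `f_c(z) = z̄^d + c` (`d ≥ 2`)
commutes with some invertible anti-holomorphic affine map `τ(z) = μ z̄ + ν`
(`μ ≠ 0`) if and only if `c̄ = ω^j c` for some integer `j`; moreover any such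
commuting `τ` has `ν = 0`, `μ^(d+1) = 1`, and is an anti-holomorphic involution
(`τ ∘ τ = id`). -/
theorem antipolynomial_commutes_with_antiholomorphic (d : ℕ) (hd : 2 ≤ d) (c : ℂ) :
    ((∃ μ ν : ℂ, μ ≠ 0 ∧
        ∀ z : ℂ, μ * starRingEnd ℂ ((starRingEnd ℂ z) ^ d + c) + ν =
          (starRingEnd ℂ (μ * starRingEnd ℂ z + ν)) ^ d + c) ↔
      ∃ j : ℤ, starRingEnd ℂ c =
        Complex.exp (2 * Real.pi * Complex.I / ((d : ℂ) + 1)) ^ j * c) ∧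
    ∀ μ ν : ℂ, μ ≠ 0 →
      (∀ z : ℂ, μ * starRingEnd ℂ ((starRingEnd ℂ z) ^ d + c) + ν =
        (starRingEnd ℂ (μ * starRingEnd ℂ z + ν)) ^ d + c) →
      ν = 0 ∧ μ ^ (d + 1) = 1 ∧
        ∀ z : ℂ, μ * starRingEnd ℂ (μ * starRingEnd ℂ z + ν) + ν = z := by
  have hω : IsPrimitiveRoot (Complex.exp (2 * Real.pi * Complex.I / ((d : ℂ) + 1))) (d + 1) := by
    exact_mod_cast Complex.isPrimitiveRoot_exp (d + 1) d.succ_ne_zero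
  refine ⟨(exists_commute_antiAffine_antiPolynomial_iff hd).trans
    (exists_pow_eq_one_and_mul_eq_iff_exists_eq_zpow_mul hω), fun μ ν hμ h => ?_⟩
  obtain ⟨rfl, hpow, -⟩ := (commute_antiAffine_antiPolynomial_iff_pow_eq_one hd hμ).1 h
  have hnorm : ‖μ‖ = 1 := Complex.norm_eq_one_of_pow_eq_one hpow d.succ_ne_zero
  exact ⟨rfl, hpow, involutive_antiAffine_zero (mul_conj_eq_one_of_norm_eq_one hnorm)⟩
end
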